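/- For every behaviour P with M settings, the supremum of the local weight over all FHV models of P with setting distribution p is the same for every full-support setting distribution p; that is, for any two setting distributions p and p′ with p(x,y) > 0 and p′(x,y) > 0 for all x,y, sup{local weight of N : N an FHV model of P with setting distribution p} = sup{local weight of N : N an FHV model of P with setting distribution p′}. Consequently μ_L(P) equals the supremum of local weights of FHV models of P for any fixed full-support setting distribution. -/

import Mathlib

/-!
In an FHV model the conditional distributions `qc x y` all coincide with `q`, so the setting
distribution `p` enters only through the marginal identity `q l = ∑ qc x y l * p x y`, which
holds automatically for a normalised `p`. Hence the same data form an FHV model for any other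
setting distribution, with the same local points. The set of achievable local weights is therefore
independent of `p`, and the infimum defining `muL` is that of a constant family. The suprema are
genuine: the set is bounded by `1`, and it is nonempty because a behaviour is modelled by itself
with a single hidden variable.
-/

open scoped BigOperators Classical
open Finset

noncomputable section

/-- The real value `±1` associated with a Boolean outcome. -/
def outVal (a : Bool) : ℝ := if a then 1 else -1

/-- A behaviour: nonnegative probabilities summing to one for every pair of settings. -/
def IsBehaviour {M N : ℕ} (P : Bool → Bool → Fin M → Fin N → ℝ) : Prop :=
  (∀ a b x y, 0 ≤ P a b x y) ∧ (∀ x y, ∑ a, ∑ b, P a b x y = 1)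

/-- A full-support probability distribution on pairs of settings. -/
def IsSettingDist {M : ℕ} (p : Fin M → Fin M → ℝ) : Prop :=
  (∀ x y, 0 < p x y) ∧ ∑ x, ∑ y, p x y = 1

/-- A hidden-variable model of the behaviour `P` with setting distribution `p`,
with finite hidden-variable space `Fin n`. -/
structure HVModel (M : ℕ) (P : Bool → Bool → Fin M → Fin M → ℝ)
    (p : Fin M → Fin M → ℝ) where
  n : ℕ
  q : Fin n → ℝ
  q_nonneg : ∀ l, 0 ≤ q l
  q_sum : ∑ l, q l = 1
  qc : Fin M → Fin M → Fin n → ℝ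
  qc_nonneg : ∀ x y l, 0 ≤ qc x y l
  qc_sum : ∀ x y, ∑ l, qc x y l = 1
  q_marg : ∀ l, q l = ∑ x, ∑ y, qc x y l * p x y
  Pc : Fin n → Bool → Bool → Fin M → Fin M → ℝ
  Pc_nonneg : ∀ l a b x y, 0 ≤ Pc l a b x y
  Pc_sum : ∀ l x y, ∑ a, ∑ b, Pc l a b x y = 1
  reproduce : ∀ a b x y, P a b x y = ∑ l, Pc l a b x y * qc x y l

namespace HVModel

variable {M : ℕ} {P : Bool → Bool → Fin M → Fin M → ℝ} {p : Fin M → Fin M → ℝ}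

/-- A hidden variable is local if the conditional outcome distribution factorises. -/
def IsLocalPoint (N : HVModel M P p) (l : Fin N.n) : Prop :=
  ∃ α β : Bool → Fin M → ℝ,
    (∀ a x, 0 ≤ α a x) ∧ (∀ x, ∑ a, α a x = 1) ∧
    (∀ b y, 0 ≤ β b y) ∧ (∀ y, ∑ b, β b y = 1) ∧
    (∀ a b x y, N.Pc l a b x y = α a x * β b y)

/-- A hidden variable is free if it is independent of the settings. -/
def IsFreePoint (N : HVModel M P p) (l : Fin N.n) : Prop :=
  ∀ x y, N.qc x y l = N.q l

/-- The total weight of the local hidden variables. -/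
def localWeight (N : HVModel M P p) : ℝ :=
  ∑ l, if N.IsLocalPoint l then N.q l else 0

/-- The total weight of the free hidden variables. -/
def freeWeight (N : HVModel M P p) : ℝ :=
  ∑ l, if N.IsFreePoint l then N.q l else 0

/-- An FHV model: every hidden variable is free. -/
def IsFHV (N : HVModel M P p) : Prop := ∀ l, N.IsFreePoint l

/-- An LHV model: every hidden variable is local. -/
def IsLHV (N : HVModel M P p) : Prop := ∀ l, N.IsLocalPoint l

end HVModel

/-- Local weights achievable by FHV models of `P` with setting distribution `p`. -/
def FHVLocalWeights (M : ℕ) (P : Bool → Bool → Fin M → Fin M → ℝ)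
    (p : Fin M → Fin M → ℝ) : Set ℝ :=
  {w | ∃ N : HVModel M P p, N.IsFHV ∧ w = N.localWeight}

/-- Free weights achievable by LHV models of `P` with setting distribution `p`. -/
def LHVFreeWeights (M : ℕ) (P : Bool → Bool → Fin M → Fin M → ℝ)
    (p : Fin M → Fin M → ℝ) : Set ℝ :=
  {w | ∃ N : HVModel M P p, N.IsLHV ∧ w = N.freeWeight}

/-- The measure of locality `μ_L`. -/
def muL (M : ℕ) (P : Bool → Bool → Fin M → Fin M → ℝ) : ℝ :=
  ⨅ sp : {f : Fin M → Fin M → ℝ // IsSettingDist f}, sSup (FHVLocalWeights M P sp.1)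

/-- The measure of free choice `μ_F`. -/
def muF (M : ℕ) (P : Bool → Bool → Fin M → Fin M → ℝ) : ℝ :=
  ⨅ sp : {f : Fin M → Fin M → ℝ // IsSettingDist f}, sSup (LHVFreeWeights M P sp.1)

namespace HVModel

variable {M : ℕ} {P : Bool → Bool → Fin M → Fin M → ℝ} {p p' : Fin M → Fin M → ℝ}

/-- An FHV model regarded as a model for another normalised weight `p'` on pairs of settings, with
all other data unchanged. -/
def IsFHV.changeDist {N : HVModel M P p} (hN : N.IsFHV) (hp' : ∑ x, ∑ y, p' x y = 1) :
    HVModel M P p' :=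
  { N with
    q_marg := fun l => by
      have hfree : ∀ x y, N.qc x y l = N.q l := hN l
      simp only [hfree, ← Finset.mul_sum, hp', mul_one] }

theorem IsFHV.isFHV_changeDist {N : HVModel M P p} (hN : N.IsFHV)
    (hp' : ∑ x, ∑ y, p' x y = 1) : (hN.changeDist hp').IsFHV :=
  hN

theorem IsFHV.localWeight_changeDist {N : HVModel M P p} (hN : N.IsFHV)
    (hp' : ∑ x, ∑ y, p' x y = 1) : (hN.changeDist hp').localWeight = N.localWeight :=
  rfl

/-- The model of a behaviour `P` with a single hidden variable, whose conditional outcome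
distribution is `P` itself. -/
def ofBehaviour (hP : IsBehaviour P) (hp : ∑ x, ∑ y, p x y = 1) : HVModel M P p where
  n := 1
  q _ := 1
  q_nonneg _ := zero_le_one
  q_sum := by simp
  qc _ _ _ := 1
  qc_nonneg _ _ _ := zero_le_one
  qc_sum := by simp
  q_marg := by simp [hp]
  Pc _ := P
  Pc_nonneg _ := hP.1
  Pc_sum _ := hP.2
  reproduce := by simp

theorem isFHV_ofBehaviour (hP : IsBehaviour P) (hp : ∑ x, ∑ y, p x y = 1) :
    (ofBehaviour hP hp).IsFHV :=
  fun _ _ _ => rfl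

theorem localWeight_le_one (N : HVModel M P p) : N.localWeight ≤ 1 :=
  calc
    N.localWeight ≤ ∑ l, N.q l :=
      Finset.sum_le_sum fun l _ => by split_ifs; exacts [le_rfl, N.q_nonneg l]
    _ = 1 := N.q_sum

end HVModel

section

variable {M : ℕ} {P : Bool → Bool → Fin M → Fin M → ℝ} {p p' : Fin M → Fin M → ℝ}

theorem FHVLocalWeights_nonempty (hP : IsBehaviour P) (hp : ∑ x, ∑ y, p x y = 1) :
    (FHVLocalWeights M P p).Nonempty :=
  ⟨_, HVModel.ofBehaviour hP hp, HVModel.isFHV_ofBehaviour hP hp, rfl⟩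

theorem bddAbove_FHVLocalWeights : BddAbove (FHVLocalWeights M P p) := by
  refine ⟨1, ?_⟩
  rintro w ⟨N, -, rfl⟩
  exact N.localWeight_le_one

theorem FHVLocalWeights_subset (hp' : ∑ x, ∑ y, p' x y = 1) :
    FHVLocalWeights M P p ⊆ FHVLocalWeights M P p' := by
  rintro w ⟨N, hN, rfl⟩
  exact ⟨hN.changeDist hp', hN.isFHV_changeDist hp', (hN.localWeight_changeDist hp').symm⟩

theorem FHVLocalWeights_eq (hp : ∑ x, ∑ y, p x y = 1) (hp' : ∑ x, ∑ y, p' x y = 1) :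
    FHVLocalWeights M P p = FHVLocalWeights M P p' :=
  (FHVLocalWeights_subset hp').antisymm (FHVLocalWeights_subset hp)

end

theorem isSettingDist_uniform (M : ℕ) [NeZero M] :
    IsSettingDist fun _ _ : Fin M => ((M : ℝ) * M)⁻¹ := by
  have hM : (M : ℝ) ≠ 0 := NeZero.ne _
  refine ⟨fun _ _ => by positivity, ?_⟩
  simp [hM]

theorem muL_eq_sSup_FHVLocalWeights {M : ℕ} {P : Bool → Bool → Fin M → Fin M → ℝ}
    {p : Fin M → Fin M → ℝ} (hp : ∑ x, ∑ y, p x y = 1) :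
    muL M P = sSup (FHVLocalWeights M P p) := by
  have : NeZero M := ⟨by rintro rfl; simp at hp⟩
  -- The real infimum over an empty family would be the junk value 0.
  have : Nonempty {f : Fin M → Fin M → ℝ // IsSettingDist f} := ⟨⟨_, isSettingDist_uniform M⟩⟩
  have hconst : ∀ sp : {f : Fin M → Fin M → ℝ // IsSettingDist f},
      sSup (FHVLocalWeights M P sp.1) = sSup (FHVLocalWeights M P p) :=
    fun sp => by rw [FHVLocalWeights_eq sp.2.2 hp]
  simp only [muL, hconst, ciInf_const]

theorem sup_FHV_localWeight_setting_independent_general {M : ℕ}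
    {P : Bool → Bool → Fin M → Fin M → ℝ} (hP : IsBehaviour P)
    {p : Fin M → Fin M → ℝ} (hp : ∑ x, ∑ y, p x y = 1) :
    IsLUB (FHVLocalWeights M P p) (muL M P) := by
  rw [muL_eq_sSup_FHVLocalWeights hp]
  exact isLUB_csSup (FHVLocalWeights_nonempty hP hp) bddAbove_FHVLocalWeights

theorem sup_FHV_localWeight_setting_independent (M : ℕ)
    (P : Bool → Bool → Fin M → Fin M → ℝ) (hP : IsBehaviour P) :
    (∀ p p' : Fin M → Fin M → ℝ, IsSettingDist p → IsSettingDist p' →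
      sSup (FHVLocalWeights M P p) = sSup (FHVLocalWeights M P p')) ∧
    (∀ p : Fin M → Fin M → ℝ, IsSettingDist p →
      muL M P = sSup (FHVLocalWeights M P p)) := by
  have hmuL : ∀ p, IsSettingDist p → muL M P = sSup (FHVLocalWeights M P p) := fun p hp =>
    ((sup_FHV_localWeight_setting_independent_general hP hp.2).csSup_eq
      (FHVLocalWeights_nonempty hP hp.2)).symm
  exact ⟨fun p p' hp hp' => (hmuL p hp).symm.trans (hmuL p' hp'), hmuL⟩
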